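/- (Data confidentiality of offers in P1, pro_notin_spies.) If evs ∈ p1, the event pro B ofr A r I L J C occurs in evs, A ∉ bad and B ∉ bad, then Nonce ofr ∉ analz (spies evs); i.e. the spy cannot obtain an offer made by an honest shop for an honest owner's agent. -/

import Mathlib

inductive agent : Type
  | Server : agent
  | Friend : ℕ → agent
  | Spy : agent
deriving DecidableEq

inductive msg : Type
  | Agent : agent → msg
  | Number : ℕ → msg
  | Nonce : ℕ → msg
  | Key : ℕ → msg
  | Hash : msg → msg
  | MPair : msg → msg → msg
  | Crypt : ℕ → msg → msg
deriving DecidableEq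

inductive partsP (H : Set msg) : msg → Prop
  | Inj : ∀ X, X ∈ H → partsP H X
  | Fst : ∀ X Y, partsP H (msg.MPair X Y) → partsP H X
  | Snd : ∀ X Y, partsP H (msg.MPair X Y) → partsP H Y
  | Body : ∀ K X, partsP H (msg.Crypt K X) → partsP H X

/-- `parts H`: sub-components of messages of `H`. -/
def parts (H : Set msg) : Set msg := {X | partsP H X}

inductive analzP (invKey : ℕ → ℕ) (H : Set msg) : msg → Prop
  | Inj : ∀ X, X ∈ H → analzP invKey H X
  | Fst : ∀ X Y, analzP invKey H (msg.MPair X Y) → analzP invKey H X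
  | Snd : ∀ X Y, analzP invKey H (msg.MPair X Y) → analzP invKey H Y
  | Decrypt : ∀ K X, analzP invKey H (msg.Crypt K X) →
      analzP invKey H (msg.Key (invKey K)) → analzP invKey H X

/-- `analz invKey H`: what can be obtained by decomposing and decrypting messages of `H`. -/
def analz (invKey : ℕ → ℕ) (H : Set msg) : Set msg := {X | analzP invKey H X}

inductive synthP (H : Set msg) : msg → Prop
  | Inj : ∀ X, X ∈ H → synthP H X
  | Ag : ∀ a, synthP H (msg.Agent a)
  | Num : ∀ n, synthP H (msg.Number n)
  | Hsh : ∀ X, synthP H X → synthP H (msg.Hash X)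
  | Pr : ∀ X Y, synthP H X → synthP H Y → synthP H (msg.MPair X Y)
  | Cry : ∀ K X, synthP H X → msg.Key K ∈ H → synthP H (msg.Crypt K X)

/-- `synth H`: messages that can be synthesized from `H`. -/
def synth (H : Set msg) : Set msg := {X | synthP H X}

inductive guardP (invKey : ℕ → ℕ) (n : ℕ) (Ks : Set ℕ) : msg → Prop
  | No_Nonce : ∀ X, msg.Nonce n ∉ parts {X} → guardP invKey n Ks X
  | Guard : ∀ K X, invKey K ∈ Ks → guardP invKey n Ks (msg.Crypt K X)
  | Cry : ∀ K X, guardP invKey n Ks X → guardP invKey n Ks (msg.Crypt K X)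
  | Pr : ∀ X Y, guardP invKey n Ks X → guardP invKey n Ks Y →
      guardP invKey n Ks (msg.MPair X Y)

/-- `guard n Ks`: messages in which `Nonce n` is guarded by the keys of `Ks`. -/
def guardMsg (invKey : ℕ → ℕ) (n : ℕ) (Ks : Set ℕ) : Set msg := {X | guardP invKey n Ks X}

/-- `Guard n Ks H`: every message of `H` lies in `guard n Ks`. -/
def Guard (invKey : ℕ → ℕ) (n : ℕ) (Ks : Set ℕ) (H : Set msg) : Prop :=
  ∀ X ∈ H, X ∈ guardMsg invKey n Ks
inductive event : Type
  | Says : agent → agent → msg → event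
deriving DecidableEq

def msgOf : event → msg
  | event.Says _ _ X => X

/-- Set of messages sent in a trace. -/
def sent (evs : List event) : Set msg :=
  {X | ∃ A B, event.Says A B X ∈ evs}
/-- Private key of an agent: the inverse of its public key. -/
def priK (invKey : ℕ → ℕ) (pubK : agent → ℕ) (A : agent) : ℕ := invKey (pubK A)

/-- Initial knowledge of each agent in a public-key infrastructure:
every agent knows its own private key and all public keys; the spy moreover
knows the private keys of the bad agents. -/
def initStatePK (invKey : ℕ → ℕ) (pubK : agent → ℕ) (bad : Set agent) : agent → Set msg :=
  fun A =>
    match A with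
    | agent.Spy =>
        {X | ∃ B ∈ bad, X = msg.Key (priK invKey pubK B)} ∪ {X | ∃ B, X = msg.Key (pubK B)}
    | _ => {msg.Key (priK invKey pubK A)} ∪ {X | ∃ B, X = msg.Key (pubK B)}

/-- `spies evs`: the private keys of the bad agents, all public keys, and
every message sent in `evs`. -/
def spiesPK (invKey : ℕ → ℕ) (pubK : agent → ℕ) (bad : Set agent) (evs : List event) :
    Set msg :=
  initStatePK invKey pubK bad agent.Spy ∪ sent evs

/-- `used evs`: parts of all agents' initial knowledge and of all messages sent in `evs`. -/
def usedPK (invKey : ℕ → ℕ) (pubK : agent → ℕ) (bad : Set agent) (evs : List event) :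
    Set msg :=
  parts ((⋃ A, initStatePK invKey pubK bad A) ∪ sent evs)
/-- The empty encoded list: a fixed atomic message. -/
def nilm : msg := msg.Number 0

/-- Cons on encoded lists. -/
def consm (X L : msg) : msg := msg.MPair X L

/-- Head of an encoded list. -/
def headm : msg → msg
  | msg.MPair X _ => X
  | _ => nilm

/-- Tail of an encoded list. -/
def tailm : msg → msg
  | msg.MPair _ L => L
  | _ => nilm

/-- Length of an encoded list. -/
def lenm : msg → ℕ
  | msg.MPair _ L => lenm L + 1
  | _ => 0

/-- `ith L i` is the `i+1`-th element of `L`. -/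
def ith : msg → ℕ → msg
  | L, 0 => headm L
  | L, i + 1 => ith (tailm L) i

/-- `repl L i M` is `L` with its `i+1`-th element replaced by `M`. -/
def repl : msg → ℕ → msg → msg
  | msg.MPair _ L, 0, M => msg.MPair M L
  | msg.MPair X L, i + 1, M => msg.MPair X (repl L i M)
  | L, _, _ => L

/-- `insm L i M` is `L` with `M` inserted before the `i+1`-th element of `L`. -/
def insm : msg → ℕ → msg → msg
  | L, 0, M => msg.MPair M L
  | msg.MPair X L, i + 1, M => msg.MPair X (insm L i M)
  | L, _, _ => L

/-- `trunc L i` truncates the `i` first elements of `L`. -/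
def trunc : msg → ℕ → msg
  | L, 0 => L
  | msg.MPair _ L, i + 1 => trunc L i
  | L, _ => L
/-- `sign B X = ⟨Agent B, X, Crypt (priK B) (Hash X)⟩`. -/
def sign (invKey : ℕ → ℕ) (pubK : agent → ℕ) (B : agent) (X : msg) : msg :=
  msg.MPair (msg.Agent B) (msg.MPair X (msg.Crypt (invKey (pubK B)) (msg.Hash X)))

/-- The chaining relation of protocol P1. -/
def chain (invKey : ℕ → ℕ) (pubK : agent → ℕ) (B : agent) (ofr : ℕ) (A : agent)
    (L : msg) (C : agent) : msg :=
  sign invKey pubK B (msg.MPair (msg.Crypt (pubK A) (msg.Nonce ofr))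
    (msg.Hash (msg.MPair (headm L) (msg.Agent C))))

/-- The start of the chaining relation. -/
def anchor (invKey : ℕ → ℕ) (pubK : agent → ℕ) (A : agent) (n : ℕ) (B : agent) : msg :=
  chain invKey pubK A n A (consm nilm nilm) B

/-- The signer of an offer `chain B ofr A L C`, i.e. `Agent B`. -/
def shop (M : msg) : msg := headm M

/-- The designated next server of an offer `chain B ofr A L C`, i.e. `C`. -/
def next_shop : msg → agent
  | msg.MPair _ (msg.MPair (msg.MPair _ (msg.Hash (msg.MPair _ (msg.Agent C)))) _) => C
  | _ => agent.Server
/-- Messages encoding lists of agent names. -/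
inductive aglP : msg → Prop
  | Nil : aglP nilm
  | Cons : ∀ a I, aglP I → aglP (consm (msg.Agent a) I)

def agl : Set msg := {I | aglP I}

/-- Append of encoded lists. -/
def appm : msg → msg → msg
  | msg.MPair X L, I => msg.MPair X (appm L I)
  | _, I => I

/-- `delm a I` removes the first occurrence of `a` from the encoded list `I`. -/
def delm (a : msg) : msg → msg
  | msg.MPair X L => if X = a then L else msg.MPair X (delm a L)
  | L => L

/-- `isin a I` means that `a` occurs in the encoded list `I`. -/
def isin (a : msg) : msg → Prop
  | msg.MPair X L => X = a ∨ isin a L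
  | _ => False

/-- The request message of P1. -/
def reqm (invKey : ℕ → ℕ) (pubK : agent → ℕ) (A : agent) (r n : ℕ) (I : msg) (B : agent) :
    msg :=
  msg.MPair (msg.Agent A) (msg.MPair (msg.Number r)
    (msg.MPair (consm (msg.Agent A) (consm (msg.Agent B) I))
      (consm (anchor invKey pubK A n B) nilm)))

/-- The proposition message of P1. -/
def prom (invKey : ℕ → ℕ) (pubK : agent → ℕ) (B : agent) (ofr : ℕ) (A : agent) (r : ℕ)
    (I L J : msg) (C : agent) : msg :=
  msg.MPair (msg.Agent A) (msg.MPair (msg.Number r)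
    (msg.MPair (appm J (delm (msg.Agent B) I))
      (consm (chain invKey pubK B ofr A L C) L)))

/-- The request event of P1. -/
def req (invKey : ℕ → ℕ) (pubK : agent → ℕ) (A : agent) (r n : ℕ) (I : msg) (B : agent) :
    event :=
  event.Says A B (reqm invKey pubK A r n I B)

/-- The proposition event of P1. -/
def pro (invKey : ℕ → ℕ) (pubK : agent → ℕ) (B : agent) (ofr : ℕ) (A : agent) (r : ℕ)
    (I L J : msg) (C : agent) : event :=
  event.Says B C (prom invKey pubK B ofr A r I L J C)

/-- The protocol P1. -/
inductive p1 (invKey : ℕ → ℕ) (pubK : agent → ℕ) (bad : Set agent) : List event → Prop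
  | Nil : p1 invKey pubK bad []
  | Fake : ∀ evs B X, p1 invKey pubK bad evs →
      X ∈ synth (analz invKey (spiesPK invKey pubK bad evs)) →
      p1 invKey pubK bad (event.Says agent.Spy B X :: evs)
  | Req : ∀ evs A B r n I, p1 invKey pubK bad evs →
      msg.Nonce n ∉ usedPK invKey pubK bad evs → I ∈ agl →
      p1 invKey pubK bad (req invKey pubK A r n I B :: evs)
  | Prop : ∀ evs A A' B C r ofr I L J, p1 invKey pubK bad evs →
      I ∈ agl → J ∈ agl →
      event.Says A' B (msg.MPair (msg.Agent A)
        (msg.MPair (msg.Number r) (msg.MPair I L))) ∈ evs →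
      isin (msg.Agent C) (appm J (delm (msg.Agent B) I)) →
      msg.Nonce ofr ∉ usedPK invKey pubK bad evs →
      p1 invKey pubK bad (pro invKey pubK B ofr A r I L J C :: evs)

/-!
The offer `ofr` travels only inside `Crypt (pubK A) (Nonce ofr)`. As long as the spy does not
know `priK A`, analysing and synthesising keep every occurrence of the nonce behind such an
encryption, so this guardedness of the spy's knowledge is an invariant of the trace from the moment
the offer is made; before that moment the nonce does not occur at all. The spy never learns
`priK A` because the protocol messages introduce no keys.
-/

section Parts

variable {G H : Set msg} {X Y Z : msg}

theorem subset_parts : H ⊆ parts H := partsP.Inj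

theorem parts_subset_of_subset_parts (hGH : G ⊆ parts H) : parts G ⊆ parts H := by
  intro X (hX : partsP G X)
  induction hX with
  | Inj X hX => exact hGH hX
  | Fst X Y _ ih => exact .Fst X Y ih
  | Snd X Y _ ih => exact .Snd X Y ih
  | Body K X _ ih => exact .Body K X ih

theorem parts_mono (hGH : G ⊆ H) : parts G ⊆ parts H :=
  parts_subset_of_subset_parts (hGH.trans subset_parts)

theorem parts_singleton_subset (hX : X ∈ H) : parts {X} ⊆ parts H :=
  parts_mono (Set.singleton_subset_iff.2 hX)

theorem mem_parts_iff_exists : Z ∈ parts H ↔ ∃ X ∈ H, Z ∈ parts {X} := by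
  refine ⟨fun (hZ : partsP H Z) ↦ ?_, fun ⟨_, hX, hZ⟩ ↦ parts_singleton_subset hX hZ⟩
  induction hZ with
  | Inj X hX => exact ⟨X, hX, subset_parts rfl⟩
  | Fst X Y _ ih => exact ih.imp fun _ ⟨hM, hXY⟩ ↦ ⟨hM, .Fst X Y hXY⟩
  | Snd X Y _ ih => exact ih.imp fun _ ⟨hM, hXY⟩ ↦ ⟨hM, .Snd X Y hXY⟩
  | Body K X _ ih => exact ih.imp fun _ ⟨hM, hX⟩ ↦ ⟨hM, .Body K X hX⟩

theorem parts_insert : parts (insert X H) = parts {X} ∪ parts H := by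
  ext Z
  rw [Set.mem_union, mem_parts_iff_exists, Set.exists_mem_insert, ← mem_parts_iff_exists]

theorem parts_eq_self_of_subset_range_Key (hH : H ⊆ Set.range msg.Key) : parts H = H := by
  refine subset_parts.antisymm' fun X (hX : partsP H X) ↦ ?_
  induction hX with
  | Inj _ hX => exact hX
  | Fst _ _ _ ih | Snd _ _ _ ih | Body _ _ _ ih => simpa using hH ih

@[simp]
theorem parts_Agent (a : agent) : parts {msg.Agent a} = {msg.Agent a} := by
  refine subset_parts.antisymm' fun X (hX : partsP _ X) ↦ ?_
  induction hX <;> simp_all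

@[simp]
theorem parts_Number (m : ℕ) : parts {msg.Number m} = {msg.Number m} := by
  refine subset_parts.antisymm' fun X (hX : partsP _ X) ↦ ?_
  induction hX <;> simp_all

@[simp]
theorem parts_Nonce (m : ℕ) : parts {msg.Nonce m} = {msg.Nonce m} := by
  refine subset_parts.antisymm' fun X (hX : partsP _ X) ↦ ?_
  induction hX <;> simp_all

@[simp]
theorem parts_Hash (X : msg) : parts {msg.Hash X} = {msg.Hash X} := by
  refine subset_parts.antisymm' fun X (hX : partsP _ X) ↦ ?_
  induction hX <;> simp_all

@[simp]
theorem mem_parts_MPair :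
    Z ∈ parts {msg.MPair X Y} ↔ Z = msg.MPair X Y ∨ Z ∈ parts {X} ∨ Z ∈ parts {Y} := by
  have hself : msg.MPair X Y ∈ parts {msg.MPair X Y} := subset_parts rfl
  have hX : parts {X} ⊆ parts {msg.MPair X Y} :=
    parts_subset_of_subset_parts (Set.singleton_subset_iff.2 (.Fst X Y hself))
  have hY : parts {Y} ⊆ parts {msg.MPair X Y} :=
    parts_subset_of_subset_parts (Set.singleton_subset_iff.2 (.Snd X Y hself))
  refine ⟨fun (hZ : partsP _ Z) ↦ ?_, fun hZ ↦ hZ.elim (· ▸ hself) (·.elim (hX ·) (hY ·))⟩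
  induction hZ with
  | Inj Z hZ => exact .inl hZ
  | Fst U V _ ih =>
    rcases ih with heq | hUV | hUV
    · cases heq; exact .inr (.inl (subset_parts rfl))
    · exact .inr (.inl (.Fst U V hUV))
    · exact .inr (.inr (.Fst U V hUV))
  | Snd U V _ ih =>
    rcases ih with heq | hUV | hUV
    · cases heq; exact .inr (.inr (subset_parts rfl))
    · exact .inr (.inl (.Snd U V hUV))
    · exact .inr (.inr (.Snd U V hUV))
  | Body K U _ ih =>
    rcases ih with heq | hU | hU
    · cases heq
    · exact .inr (.inl (.Body K U hU))
    · exact .inr (.inr (.Body K U hU))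

@[simp]
theorem mem_parts_Crypt {K : ℕ} :
    Z ∈ parts {msg.Crypt K X} ↔ Z = msg.Crypt K X ∨ Z ∈ parts {X} := by
  have hself : msg.Crypt K X ∈ parts {msg.Crypt K X} := subset_parts rfl
  have hX : parts {X} ⊆ parts {msg.Crypt K X} :=
    parts_subset_of_subset_parts (Set.singleton_subset_iff.2 (.Body K X hself))
  refine ⟨fun (hZ : partsP _ Z) ↦ ?_, fun hZ ↦ hZ.elim (· ▸ hself) (hX ·)⟩
  induction hZ with
  | Inj Z hZ => exact .inl hZ
  | Fst U V _ ih =>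
    rcases ih with heq | hUV
    · cases heq
    · exact .inr (.Fst U V hUV)
  | Snd U V _ ih =>
    rcases ih with heq | hUV
    · cases heq
    · exact .inr (.Snd U V hUV)
  | Body K' U _ ih =>
    rcases ih with heq | hU
    · cases heq; exact .inr (subset_parts rfl)
    · exact .inr (.Body K' U hU)

theorem analz_subset_parts {invKey : ℕ → ℕ} : analz invKey H ⊆ parts H := by
  intro X (hX : analzP invKey H X)
  induction hX with
  | Inj X hX => exact .Inj X hX
  | Fst X Y _ ih => exact .Fst X Y ih
  | Snd X Y _ ih => exact .Snd X Y ih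
  | Decrypt K X _ _ ih _ => exact .Body K X ih

theorem Key_mem_parts_of_mem_synth {K : ℕ} (hX : X ∈ synth H)
    (hK : msg.Key K ∈ parts {X}) : msg.Key K ∈ parts H := by
  change synthP H X at hX
  induction hX with
  | Inj X hX => exact parts_singleton_subset hX hK
  | Ag _ | Num _ | Hsh _ _ _ => simp at hK
  | Pr X Y _ _ ihX ihY =>
    have hK : msg.Key K ∈ parts {X} ∨ msg.Key K ∈ parts {Y} := by simpa using hK
    exact hK.elim ihX ihY
  | Cry K' X _ _ ih => exact ih (by simpa using hK)

theorem Key_mem_parts_of_mem_synth_analz {invKey : ℕ → ℕ} {K : ℕ}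
    (hX : X ∈ synth (analz invKey H)) (hK : msg.Key K ∈ parts {X}) : msg.Key K ∈ parts H :=
  parts_subset_of_subset_parts analz_subset_parts (Key_mem_parts_of_mem_synth hX hK)

end Parts

section Guard

variable {invKey : ℕ → ℕ} {n : ℕ} {Ks : Set ℕ} {H : Set msg} {X Y : msg}

theorem mem_guardMsg_of_Nonce_notMem_parts (hn : msg.Nonce n ∉ parts {X}) :
    X ∈ guardMsg invKey n Ks :=
  .No_Nonce X hn

theorem Guard_of_Nonce_notMem_parts (hn : msg.Nonce n ∉ parts H) : Guard invKey n Ks H :=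
  fun _ hX ↦ mem_guardMsg_of_Nonce_notMem_parts fun hnX ↦ hn (parts_singleton_subset hX hnX)

@[simp]
theorem Agent_mem_guardMsg (a : agent) : msg.Agent a ∈ guardMsg invKey n Ks :=
  mem_guardMsg_of_Nonce_notMem_parts (by simp)

@[simp]
theorem Number_mem_guardMsg (m : ℕ) : msg.Number m ∈ guardMsg invKey n Ks :=
  mem_guardMsg_of_Nonce_notMem_parts (by simp)

@[simp]
theorem Hash_mem_guardMsg (X : msg) : msg.Hash X ∈ guardMsg invKey n Ks :=
  mem_guardMsg_of_Nonce_notMem_parts (by simp)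

@[simp]
theorem Nonce_mem_guardMsg {m : ℕ} : msg.Nonce m ∈ guardMsg invKey n Ks ↔ n ≠ m := by
  refine ⟨fun (h : guardP invKey n Ks _) ↦ ?_,
    fun h ↦ mem_guardMsg_of_Nonce_notMem_parts (by simpa using h)⟩
  cases h with
  | No_Nonce _ hn => simpa using hn

@[simp]
theorem MPair_mem_guardMsg : msg.MPair X Y ∈ guardMsg invKey n Ks ↔
    X ∈ guardMsg invKey n Ks ∧ Y ∈ guardMsg invKey n Ks := by
  refine ⟨fun (h : guardP invKey n Ks _) ↦ ?_, fun h ↦ .Pr X Y h.1 h.2⟩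
  cases h with
  | No_Nonce _ hn =>
    simp only [mem_parts_MPair, not_or] at hn
    exact ⟨.No_Nonce X hn.2.1, .No_Nonce Y hn.2.2⟩
  | Pr _ _ hX hY => exact ⟨hX, hY⟩

@[simp]
theorem Crypt_mem_guardMsg {K : ℕ} : msg.Crypt K X ∈ guardMsg invKey n Ks ↔
    invKey K ∈ Ks ∨ X ∈ guardMsg invKey n Ks := by
  refine ⟨fun (h : guardP invKey n Ks _) ↦ ?_, fun h ↦ h.elim (.Guard K X) (.Cry K X)⟩
  cases h with
  | No_Nonce _ hn =>
    simp only [mem_parts_Crypt, not_or] at hn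
    exact .inr (.No_Nonce X hn.2)
  | Guard _ _ hK => exact .inl hK
  | Cry _ _ hX => exact .inr hX

theorem Guard_insert :
    Guard invKey n Ks (insert X H) ↔ X ∈ guardMsg invKey n Ks ∧ Guard invKey n Ks H :=
  Set.forall_mem_insert

theorem Guard_analz (hH : Guard invKey n Ks H) (hKs : ∀ K ∈ Ks, msg.Key K ∉ analz invKey H) :
    Guard invKey n Ks (analz invKey H) := by
  intro X (hX : analzP invKey H X)
  induction hX with
  | Inj X hX => exact hH X hX
  | Fst X Y _ ih => exact (MPair_mem_guardMsg.1 ih).1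
  | Snd X Y _ ih => exact (MPair_mem_guardMsg.1 ih).2
  | Decrypt K X _ hKey ih _ => exact (Crypt_mem_guardMsg.1 ih).resolve_left (hKs _ · hKey)

theorem Guard_synth (hH : Guard invKey n Ks H) : Guard invKey n Ks (synth H) := by
  intro X (hX : synthP H X)
  induction hX with
  | Inj X hX => exact hH X hX
  | Ag a => exact Agent_mem_guardMsg a
  | Num m => exact Number_mem_guardMsg m
  | Hsh X _ _ => exact Hash_mem_guardMsg X
  | Pr X Y _ _ ihX ihY => exact MPair_mem_guardMsg.2 ⟨ihX, ihY⟩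
  | Cry K X _ _ ih => exact Crypt_mem_guardMsg.2 (.inr ih)

end Guard

section Agl

variable {I J : msg}

theorem delm_mem_agl (X : msg) (hI : I ∈ agl) : delm X I ∈ agl := by
  change aglP I at hI
  induction hI with
  | Nil => exact .Nil
  | Cons a I hI ih =>
    rw [consm, delm]
    split
    · exact hI
    · exact .Cons a _ ih

theorem appm_mem_agl (hJ : J ∈ agl) (hI : I ∈ agl) : appm J I ∈ agl := by
  change aglP J at hJ
  induction hJ with
  | Nil => exact hI
  | Cons a J _ ih => exact .Cons a _ ih

theorem Key_notMem_parts_of_mem_agl (hI : I ∈ agl) (K : ℕ) : msg.Key K ∉ parts {I} := by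
  change aglP I at hI
  induction hI with
  | Nil => simp [nilm]
  | Cons a I _ ih => simpa [consm] using ih

theorem mem_guardMsg_of_mem_agl {invKey : ℕ → ℕ} {n : ℕ} {Ks : Set ℕ} (hI : I ∈ agl) :
    I ∈ guardMsg invKey n Ks := by
  change aglP I at hI
  induction hI with
  | Nil => exact Number_mem_guardMsg 0
  | Cons a I _ ih => exact MPair_mem_guardMsg.2 ⟨Agent_mem_guardMsg a, ih⟩

end Agl

section Messages

variable {invKey : ℕ → ℕ} {pubK : agent → ℕ} {A A' B B' C C' : agent}
  {r r' ofr n m : ℕ} {I I' L L' J J' : msg} {Ks : Set ℕ}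

@[simp]
theorem Key_notMem_parts_chain (K : ℕ) :
    msg.Key K ∉ parts {chain invKey pubK B ofr A L C} := by
  simp [chain, sign]

@[simp]
theorem chain_mem_guardMsg : chain invKey pubK B ofr A L C ∈ guardMsg invKey n Ks ↔
    priK invKey pubK A ∈ Ks ∨ n ≠ ofr := by
  simp [chain, sign, priK]

theorem Key_notMem_parts_reqm (hI : I ∈ agl) (K : ℕ) :
    msg.Key K ∉ parts {reqm invKey pubK A r m I B} := by
  simp [reqm, consm, nilm, anchor, Key_notMem_parts_of_mem_agl hI]

theorem reqm_mem_guardMsg (hI : I ∈ agl) :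
    reqm invKey pubK A r m I B ∈ guardMsg invKey n Ks ↔ priK invKey pubK A ∈ Ks ∨ n ≠ m := by
  simp [reqm, consm, nilm, anchor, mem_guardMsg_of_mem_agl hI]

theorem Key_mem_parts_prom (hI : I ∈ agl) (hJ : J ∈ agl) {K : ℕ} :
    msg.Key K ∈ parts {prom invKey pubK B ofr A r I L J C} ↔ msg.Key K ∈ parts {L} := by
  simp [prom, consm, Key_notMem_parts_of_mem_agl (appm_mem_agl hJ (delm_mem_agl _ hI))]

theorem prom_mem_guardMsg (hI : I ∈ agl) (hJ : J ∈ agl) :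
    prom invKey pubK B ofr A r I L J C ∈ guardMsg invKey n Ks ↔
      (priK invKey pubK A ∈ Ks ∨ n ≠ ofr) ∧ L ∈ guardMsg invKey n Ks := by
  simp [prom, consm, mem_guardMsg_of_mem_agl (appm_mem_agl hJ (delm_mem_agl _ hI))]

theorem Nonce_mem_parts_prom :
    msg.Nonce ofr ∈ parts {prom invKey pubK B ofr A r I L J C} := by
  simp [prom, consm, chain, sign]

theorem owner_and_offer_eq_of_pro_eq_req
    (h : pro invKey pubK B ofr A r I L J C = req invKey pubK A' r' m I' B') :
    A = A' ∧ ofr = m := by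
  simp only [pro, req, prom, reqm, consm, anchor, chain, sign, event.Says.injEq,
    msg.MPair.injEq, msg.Crypt.injEq, msg.Nonce.injEq, msg.Agent.injEq] at h
  tauto

theorem owner_and_offer_eq_of_pro_eq_pro
    (h : pro invKey pubK B ofr A r I L J C = pro invKey pubK B' m A' r' I' L' J' C') :
    A = A' ∧ ofr = m := by
  simp only [pro, prom, consm, chain, sign, event.Says.injEq,
    msg.MPair.injEq, msg.Crypt.injEq, msg.Nonce.injEq, msg.Agent.injEq] at h
  tauto

end Messages

section Traces

variable {invKey : ℕ → ℕ} {pubK : agent → ℕ} {bad : Set agent} {evs : List event}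

theorem mem_spiesPK_of_Says_mem {A B : agent} {X : msg} (h : event.Says A B X ∈ evs) :
    X ∈ spiesPK invKey pubK bad evs :=
  .inr ⟨A, B, h⟩

theorem spiesPK_nil :
    spiesPK invKey pubK bad [] = initStatePK invKey pubK bad agent.Spy := by
  simp [spiesPK, sent]

theorem sent_cons (A B : agent) (X : msg) :
    sent (event.Says A B X :: evs) = insert X (sent evs) := by
  ext Y
  simp [sent, exists_or]

theorem spiesPK_cons (A B : agent) (X : msg) :
    spiesPK invKey pubK bad (event.Says A B X :: evs) = insert X (spiesPK invKey pubK bad evs) := by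
  rw [spiesPK, sent_cons, Set.union_insert, spiesPK]

theorem parts_spiesPK_subset_usedPK :
    parts (spiesPK invKey pubK bad evs) ⊆ usedPK invKey pubK bad evs :=
  parts_mono (Set.union_subset_union_left _ (Set.subset_iUnion _ agent.Spy))

theorem parts_initStatePK_Spy :
    parts (initStatePK invKey pubK bad agent.Spy) = initStatePK invKey pubK bad agent.Spy := by
  refine parts_eq_self_of_subset_range_Key ?_
  rintro _ (⟨B, -, rfl⟩ | ⟨B, rfl⟩) <;> exact ⟨_, rfl⟩

theorem Key_priK_mem_initStatePK_Spy_iff (hpri : Function.Injective (priK invKey pubK))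
    (hpubpri : ∀ A B : agent, pubK A ≠ priK invKey pubK B) {A : agent} :
    msg.Key (priK invKey pubK A) ∈ initStatePK invKey pubK bad agent.Spy ↔ A ∈ bad := by
  simp [initStatePK, hpri.eq_iff, (hpubpri _ _).symm]

theorem Nonce_mem_usedPK_of_pro_mem {A B C : agent} {r ofr : ℕ} {I L J : msg}
    (hpro : pro invKey pubK B ofr A r I L J C ∈ evs) :
    msg.Nonce ofr ∈ usedPK invKey pubK bad evs :=
  parts_spiesPK_subset_usedPK
    (parts_singleton_subset (mem_spiesPK_of_Says_mem hpro) Nonce_mem_parts_prom)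

theorem Guard_spiesPK_of_Nonce_notMem_usedPK {n : ℕ} {Ks : Set ℕ}
    (hn : msg.Nonce n ∉ usedPK invKey pubK bad evs) :
    Guard invKey n Ks (spiesPK invKey pubK bad evs) :=
  Guard_of_Nonce_notMem_parts fun h ↦ hn (parts_spiesPK_subset_usedPK h)

theorem Key_notMem_parts_spiesPK {K : ℕ} (hevs : p1 invKey pubK bad evs)
    (hK : msg.Key K ∉ initStatePK invKey pubK bad agent.Spy) :
    msg.Key K ∉ parts (spiesPK invKey pubK bad evs) := by
  induction hevs with
  | Nil => rwa [spiesPK_nil, parts_initStatePK_Spy]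
  | Fake evs B X _ hX ih =>
    rw [spiesPK_cons, parts_insert]
    exact fun h ↦ h.elim (fun hKX ↦ ih (Key_mem_parts_of_mem_synth_analz hX hKX)) ih
  | Req evs A B r n I _ _ hI ih =>
    rw [req, spiesPK_cons, parts_insert]
    exact fun h ↦ h.elim (Key_notMem_parts_reqm hI K) ih
  -- This is the constructor `p1.Prop`, whose short name is a keyword.
  | _ evs A A' B C r ofr I L J _ hI hJ hsays _ _ ih =>
    rw [pro, spiesPK_cons, parts_insert]
    refine fun h ↦ h.elim (fun hKX ↦ ih ?_) ih
    have hKL : msg.Key K ∈ parts {L} := (Key_mem_parts_prom hI hJ).1 hKX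
    exact parts_singleton_subset (mem_spiesPK_of_Says_mem hsays) (by simp [hKL])

theorem Guard_analz_spiesPK {K n : ℕ} (hevs : p1 invKey pubK bad evs)
    (hK : msg.Key K ∉ initStatePK invKey pubK bad agent.Spy)
    (hguard : Guard invKey n {K} (spiesPK invKey pubK bad evs)) :
    Guard invKey n {K} (analz invKey (spiesPK invKey pubK bad evs)) := by
  refine Guard_analz hguard ?_
  rintro _ rfl hKey
  exact Key_notMem_parts_spiesPK hevs hK (analz_subset_parts hKey)

theorem Guard_spiesPK_of_pro_mem {A B C : agent} {r ofr : ℕ} {I L J : msg}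
    (hevs : p1 invKey pubK bad evs)
    (hA : msg.Key (priK invKey pubK A) ∉ initStatePK invKey pubK bad agent.Spy)
    (hB : B ≠ agent.Spy) (hpro : pro invKey pubK B ofr A r I L J C ∈ evs) :
    Guard invKey ofr {priK invKey pubK A} (spiesPK invKey pubK bad evs) := by
  induction hevs with
  | Nil => simp at hpro
  | Fake evs B' X hevs hX ih =>
    have hpro : pro invKey pubK B ofr A r I L J C ∈ evs :=
      (List.mem_cons.1 hpro).resolve_left fun heq ↦ hB (event.Says.inj heq).1
    rw [spiesPK_cons, Guard_insert]
    exact ⟨Guard_synth (Guard_analz_spiesPK hevs hA (ih hpro)) X hX, ih hpro⟩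
  | Req evs A' B' r' n I' _ hn hI ih =>
    rw [req, spiesPK_cons, Guard_insert, reqm_mem_guardMsg hI]
    rcases List.mem_cons.1 hpro with heq | hpro'
    · obtain ⟨rfl, rfl⟩ := owner_and_offer_eq_of_pro_eq_req heq
      exact ⟨.inl rfl, Guard_spiesPK_of_Nonce_notMem_usedPK hn⟩
    · have hne : ofr ≠ n := by
        rintro rfl
        exact hn (Nonce_mem_usedPK_of_pro_mem hpro')
      exact ⟨.inr hne, ih hpro'⟩
  | _ evs A' S B' C' r' n I' L' J' _ hI hJ hsays _ hn ih =>
    rw [pro, spiesPK_cons, Guard_insert, prom_mem_guardMsg hI hJ]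
    have hL {m : ℕ} {Ks : Set ℕ} (hguard : Guard invKey m Ks (spiesPK invKey pubK bad evs)) :
        L' ∈ guardMsg invKey m Ks := by
      have hmsg := hguard _ (mem_spiesPK_of_Says_mem hsays)
      simp only [MPair_mem_guardMsg] at hmsg
      exact hmsg.2.2.2
    rcases List.mem_cons.1 hpro with heq | hpro'
    · obtain ⟨rfl, rfl⟩ := owner_and_offer_eq_of_pro_eq_pro heq
      have hguard := Guard_spiesPK_of_Nonce_notMem_usedPK (Ks := {priK invKey pubK A}) hn
      exact ⟨⟨.inl rfl, hL hguard⟩, hguard⟩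
    · have hne : ofr ≠ n := by
        rintro rfl
        exact hn (Nonce_mem_usedPK_of_pro_mem hpro')
      exact ⟨⟨.inr hne, hL (ih hpro')⟩, ih hpro'⟩

theorem pro_notin_spies_general {A B C : agent} {r ofr : ℕ} {I L J : msg}
    (hevs : p1 invKey pubK bad evs) (hpro : pro invKey pubK B ofr A r I L J C ∈ evs)
    (hA : msg.Key (priK invKey pubK A) ∉ initStatePK invKey pubK bad agent.Spy)
    (hB : B ≠ agent.Spy) :
    msg.Nonce ofr ∉ analz invKey (spiesPK invKey pubK bad evs) := fun hofr ↦
  have hguard := Guard_analz_spiesPK hevs hA (Guard_spiesPK_of_pro_mem hevs hA hB hpro)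
  Nonce_mem_guardMsg.1 (hguard _ hofr) rfl

end Traces

/-- Data confidentiality of offers in P1 (`pro_notin_spies`): the spy cannot
obtain an offer made by an honest shop for an honest owner's agent. -/
theorem pro_notin_spies
    (invKey : ℕ → ℕ) (pubK : agent → ℕ) (bad : Set agent)
    (hinv : ∀ K, invKey (invKey K) = K)
    (hpub : Function.Injective pubK)
    (hpri : Function.Injective (priK invKey pubK))
    (hpubpri : ∀ A B : agent, pubK A ≠ priK invKey pubK B)
    (hspy : agent.Spy ∈ bad)
    (evs : List event) (A B C : agent) (r ofr : ℕ) (I L J : msg)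
    (hevs : p1 invKey pubK bad evs)
    (hpro : pro invKey pubK B ofr A r I L J C ∈ evs)
    (hA : A ∉ bad) (hB : B ∉ bad) :
    msg.Nonce ofr ∉ analz invKey (spiesPK invKey pubK bad evs) := by
  have hA' : msg.Key (priK invKey pubK A) ∉ initStatePK invKey pubK bad agent.Spy :=
    mt (Key_priK_mem_initStatePK_Spy_iff hpri hpubpri).1 hA
  exact pro_notin_spies_general hevs hpro hA' (ne_of_mem_of_not_mem hspy hB).symm
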